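/- There exists a constant C > 0, depending only on d, such that for every ε ∈ (0,1), every n ≥ 2 and every symmetric ψ ∈ ΓL²_n with ‖(−L₀)^{1/2}ψ‖ < ∞, the bound ‖(−L₀)^{−1/2} A⁻_ε ψ‖ ≤ C √n ‖(−L₀)^{1/2} ψ‖ holds (this is the '−' case of the graded sector bound ‖(−L₀)^{−1/2} A^ε_σ ψ‖ ≤ C ‖√N (−L₀)^{1/2} ψ‖, since the number operator N acts on ΓL²_n as multiplication by n). -/

import Mathlib

/-!
For fixed `k`, two applications of the Cauchy–Schwarz inequality bound `|A⁻ψ(k)|²`. Over the mode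
`j` that is split, `|w·k_j|² ≤ |w|²|k_j|²` produces a factor `|w|²|k_{1:n}|²`, which the weight of
`(-L₀)^{-1/2}` absorbs. Over the split `k_j = ℓ + m`, the weight `|ℓ|²` produces the factor
`λ_ε² ∑_{0 < |ℓ|_∞ ≤ 1/ε} |ℓ|⁻²`, which is bounded uniformly in `ε`: by counting lattice points on
the shells `|ℓ|_∞ = r`, the sum is at most a multiple of `∑_{r ≤ 1/ε} r^{d-3}`, of order `log(1/ε)`
if `d = 2` and `ε^{2-d}` if `d ≥ 3`. In dimension two `λ_ε` blows up as `ε → 1`, but the cutoff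
leaves no admissible triple as soon as `ε² > 1/2`.

What remains is `∑_K |K₁|² |ψ(K)|²`, once for each `j`. By symmetry it is `2/n` times the sum of
`|K|²/2 · |ψ(K)|²`, and this gain of `1/n` is what makes the constant grow only like `√n`.
-/

open scoped BigOperators
open scoped Classical

noncomputable section

namespace SBE

/-- Lattice points of `ℤ^d`. -/
abbrev ZLat (d : ℕ) := Fin d → ℤ

/-- Kernels of the `n`-th chaos: functions on `n`-tuples of lattice points. -/
abbrev Chaos (d n : ℕ) := (Fin n → ZLat d) → ℂ

/-- Squared Euclidean norm of a lattice point. -/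
def nsq {d : ℕ} (k : ZLat d) : ℝ := ∑ i, ((k i : ℝ))^2

/-- Euclidean norm of a lattice point. -/
def eN {d : ℕ} (k : ZLat d) : ℝ := Real.sqrt (nsq k)

/-- Supremum norm of a lattice point. -/
def sN {d : ℕ} (k : ZLat d) : ℝ := ((Finset.univ.sup fun i => (k i).natAbs : ℕ) : ℝ)

/-- The norm used in the Fourier cutoff: Euclidean if `d = 2`, supremum otherwise. -/
def cutNorm (d : ℕ) (k : ZLat d) : ℝ := if d = 2 then eN k else sN k

/-- `w · k`. -/
def dotw {d : ℕ} (w : Fin d → ℝ) (k : ZLat d) : ℝ := ∑ i, w i * (k i : ℝ)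

/-- `|k_{1:n}|² = Σ_i |k_i|²`. -/
def wSq {d n : ℕ} (k : Fin n → ZLat d) : ℝ := ∑ a, nsq (k a)

/-- The coupling constant `λ_ε`. -/
def lam (d : ℕ) (ε : ℝ) : ℝ :=
  if d = 2 then (Real.sqrt (Real.log (1 / ε^2)))⁻¹ else ε ^ ((d:ℝ)/2 - 1)

/-- The Fourier cutoff indicator `J^ε_{ℓ,m}`. -/
def Jind (d : ℕ) (ε : ℝ) (l m : ZLat d) : ℝ :=
  if 0 < ε * cutNorm d l ∧ ε * cutNorm d l ≤ 1 ∧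
     0 < ε * cutNorm d m ∧ ε * cutNorm d m ≤ 1 ∧
     0 < ε * cutNorm d (l + m) ∧ ε * cutNorm d (l + m) ≤ 1 then 1 else 0

/-- Symmetry of a kernel under permutation of its arguments. -/
def Symm {d n : ℕ} (f : Chaos d n) : Prop :=
  ∀ (σ : Equiv.Perm (Fin n)) (k : Fin n → ZLat d), f (k ∘ σ) = f k

/-- A kernel vanishes whenever one of its arguments is the zero frequency
(i.e. it is really a function on `(ℤ^d_0)^n`). -/
def SuppOk {d n : ℕ} (f : Chaos d n) : Prop :=
  ∀ k : Fin n → ZLat d, (∃ a, k a = 0) → f k = 0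

/-- Summand of `‖(-L₀)^s f‖²`. -/
def sobTerm {d n : ℕ} (s : ℝ) (f : Chaos d n) (k : Fin n → ZLat d) : ℝ :=
  (wSq k / 2) ^ (2*s) * ‖f k‖^2

/-- `‖(-L₀)^s f‖² = n! Σ_k (|k_{1:n}|²/2)^{2s} |f(k)|²`. -/
def sobSq {d n : ℕ} (s : ℝ) (f : Chaos d n) : ℝ := (n.factorial : ℝ) * ∑' k, sobTerm s f k

/-- Remove the entries `i < j` from an `(n+2)`-tuple (order preservingly). -/
def remove2 {X : Type*} {n : ℕ} (k : Fin (n+2) → X) (i j : Fin (n+2)) (h : i < j) :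
    Fin n → X :=
  fun a => k (j.succAbove ((Fin.castLT i
    (Nat.lt_of_lt_of_le (Fin.lt_def.mp h) (Nat.lt_succ_iff.mp j.isLt))).succAbove a))

/-- The operator `A⁺_ε : ΓL²_{n+1} → ΓL²_{n+2}`. -/
def Aplus (d : ℕ) (w : Fin d → ℝ) (ε : ℝ) {n : ℕ} (f : Chaos d (n+1)) : Chaos d (n+2) :=
  fun k => -(2 * Complex.I / (((2*Real.pi) ^ ((d:ℝ)/2) : ℝ) : ℂ)) *
      ((lam d ε / ((n:ℝ)+2) : ℝ) : ℂ) *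
    ∑ i : Fin (n+2), ∑ j : Fin (n+2),
      if h : i < j then
        ((dotw w (k i + k j) : ℝ) : ℂ) * ((Jind d ε (k i) (k j) : ℝ) : ℂ) *
          f (Fin.cons (k i + k j) (remove2 k i j h))
      else 0

/-- The operator `A⁻_ε : ΓL²_{n+2} → ΓL²_{n+1}`. -/
def Aminus (d : ℕ) (w : Fin d → ℝ) (ε : ℝ) {n : ℕ} (f : Chaos d (n+2)) : Chaos d (n+1) :=
  fun k => (2 * Complex.I / (((2*Real.pi) ^ ((d:ℝ)/2) : ℝ) : ℂ)) *
      ((((n:ℝ)+2) * lam d ε : ℝ) : ℂ) *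
    ∑ j : Fin (n+1), ((dotw w (k j) : ℝ) : ℂ) *
      ∑' l : ZLat d, ((Jind d ε l (k j - l) : ℝ) : ℂ) *
        f (Fin.cons l (Fin.cons (k j - l) (fun a => k (j.succAbove a))))

section SquaredNorms

variable {d n : ℕ}

lemma nsq_nonneg (l : ZLat d) : 0 ≤ nsq l :=
  Finset.sum_nonneg fun _ _ => sq_nonneg _

lemma sq_le_nsq (l : ZLat d) (i : Fin d) : (l i : ℝ) ^ 2 ≤ nsq l :=
  Finset.single_le_sum (f := fun i => (l i : ℝ) ^ 2) (fun _ _ => sq_nonneg _) (Finset.mem_univ i)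

lemma nsq_pos {l : ZLat d} (hl : l ≠ 0) : 0 < nsq l := by
  obtain ⟨i, hi⟩ := Function.ne_iff.mp hl
  have : (l i : ℝ) ≠ 0 := mod_cast hi
  exact (by positivity : 0 < (l i : ℝ) ^ 2).trans_le (sq_le_nsq l i)

lemma nsq_eq_intCast (l : ZLat d) : nsq l = ((∑ i, l i ^ 2 : ℤ) : ℝ) := by
  push_cast
  rfl

lemma dotw_sq_le (w : Fin d → ℝ) (k : ZLat d) : dotw w k ^ 2 ≤ (∑ i, w i ^ 2) * nsq k :=
  Finset.sum_mul_sq_le_sq_mul_sq _ _ _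

lemma wSq_nonneg (k : Fin n → ZLat d) : 0 ≤ wSq k :=
  Finset.sum_nonneg fun _ _ => nsq_nonneg _

lemma nsq_le_wSq (k : Fin n → ZLat d) (a : Fin n) : nsq (k a) ≤ wSq k :=
  Finset.single_le_sum (f := fun a => nsq (k a)) (fun _ _ => nsq_nonneg _) (Finset.mem_univ a)

/-- Otherwise all three squared norms are `1`, but `|l|² + |m|² + |l + m|²` is even. -/
lemma exists_two_le_nsq_of_ne_zero {l m : ZLat d} (hl : l ≠ 0) (hm : m ≠ 0) (hlm : l + m ≠ 0) :
    ∃ k ∈ ({l, m, l + m} : Set (ZLat d)), 2 ≤ nsq k := by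
  have even_sum : ∑ i, l i ^ 2 + ∑ i, m i ^ 2 + ∑ i, (l + m) i ^ 2
      = 2 * ∑ i, (l i ^ 2 + m i ^ 2 + l i * m i) := by
    simp only [← Finset.sum_add_distrib, Finset.mul_sum, Pi.add_apply]
    exact Finset.sum_congr rfl fun i _ => by ring
  have hl' := nsq_pos hl
  have hm' := nsq_pos hm
  have hlm' := nsq_pos hlm
  simp only [Set.mem_insert_iff, Set.mem_singleton_iff, exists_eq_or_imp, exists_eq_left,
    nsq_eq_intCast] at hl' hm' hlm' ⊢
  norm_cast at hl' hm' hlm' ⊢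
  omega

end SquaredNorms

section LatticeShells

open Finset

lemma sum_Icc_neg_eq_sum_sum_box {α M : Type*} [Ring α] [PartialOrder α] [IsOrderedRing α]
    [LocallyFiniteOrder α] [DecidableEq α] [AddCommMonoid M] (f : α → M) (R : ℕ) :
    ∑ l ∈ Icc (-R : α) R, f l = ∑ r ∈ range (R + 1), ∑ l ∈ box r, f l := by
  induction R with
  | zero => simp
  | succ R ih =>
    rw [sum_range_succ, ← ih, add_comm (∑ l ∈ Icc _ _, f l),
      ← sum_disjUnion (disjoint_box_succ_prod R), box_succ_disjUnion]

variable {d : ℕ}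

lemma mem_Icc_neg_natCast_iff {l : ZLat d} {R : ℕ} :
    l ∈ Icc (-R : ZLat d) R ↔ ∀ i, |l i| ≤ R := by
  simp only [mem_Icc, Pi.le_def, Pi.neg_apply, Pi.natCast_apply, abs_le, forall_and]

lemma card_Icc_neg_natCast (d R : ℕ) : #(Icc (-R : ZLat d) R) = (2 * R + 1) ^ d := by
  simp only [Pi.card_Icc, Pi.neg_apply, Pi.natCast_apply, Int.card_Icc, prod_const, card_univ,
    Fintype.card_fin]
  congr 1
  lia

lemma card_box_succ_le (d r : ℕ) :
    (#(box (r + 1) : Finset (ZLat d)) : ℝ) ≤ 2 * d * 3 ^ (d - 1) * (r + 1 : ℝ) ^ (d - 1) := by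
  have card_eq : (#(box (r + 1) : Finset (ZLat d)) : ℝ)
      = (2 * (r + 1) + 1 : ℝ) ^ d - (2 * r + 1) ^ d := by
    have := card_disjUnion (box (r + 1)) _ (disjoint_box_succ_prod (α := ZLat d) r)
    rw [box_succ_disjUnion, card_Icc_neg_natCast, card_Icc_neg_natCast] at this
    rw [eq_sub_iff_add_eq]
    exact_mod_cast this.symm
  have max_le : max |2 * (r + 1 : ℝ) + 1| |2 * r + 1| ≤ 3 * (r + 1 : ℝ) := by
    rw [abs_of_nonneg (by positivity), abs_of_nonneg (by positivity)]
    exact max_le (by linarith) (by linarith)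
  calc (#(box (r + 1) : Finset (ZLat d)) : ℝ)
      ≤ |(2 * (r + 1) + 1 : ℝ) ^ d - (2 * r + 1) ^ d| := card_eq ▸ le_abs_self _
    _ ≤ |(2 * (r + 1) + 1 : ℝ) - (2 * r + 1)| * d *
          max |2 * (r + 1 : ℝ) + 1| |2 * r + 1| ^ (d - 1) :=
        abs_pow_sub_pow_le _ _ _
    _ = 2 * d * max |2 * (r + 1 : ℝ) + 1| |2 * r + 1| ^ (d - 1) := by
        rw [show (2 * (r + 1) + 1 : ℝ) - (2 * r + 1) = 2 by ring, abs_two]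
    _ ≤ 2 * d * (3 * (r + 1 : ℝ)) ^ (d - 1) := by gcongr
    _ = 2 * d * 3 ^ (d - 1) * (r + 1 : ℝ) ^ (d - 1) := by rw [mul_pow, mul_assoc (2 * _ : ℝ)]

lemma sq_le_nsq_of_mem_box {r : ℕ} {l : ZLat d} (hl : l ∈ box r) : (r : ℝ) ^ 2 ≤ nsq l := by
  cases r with
  | zero => simpa using nsq_nonneg l
  | succ r =>
    rw [box_succ_eq_sdiff, mem_sdiff, mem_Icc_neg_natCast_iff, mem_Icc_neg_natCast_iff] at hl
    obtain ⟨i, hi⟩ := not_forall.mp hl.2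
    have hi' : ((r + 1 : ℕ) : ℝ) ≤ |(l i : ℝ)| := mod_cast not_le.mp hi
    calc ((r + 1 : ℕ) : ℝ) ^ 2 ≤ |(l i : ℝ)| ^ 2 := by gcongr
      _ = (l i : ℝ) ^ 2 := sq_abs _
      _ ≤ nsq l := sq_le_nsq l i

lemma sum_box_succ_inv_nsq_le (d r : ℕ) :
    ∑ l ∈ (box (r + 1) : Finset (ZLat d)), (nsq l)⁻¹ ≤
      2 * d * 3 ^ (d - 1) * ((r + 1 : ℝ) ^ (d - 1) / (r + 1) ^ 2) := by
  calc ∑ l ∈ (box (r + 1) : Finset (ZLat d)), (nsq l)⁻¹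
      ≤ #(box (r + 1) : Finset (ZLat d)) • ((r + 1 : ℝ) ^ 2)⁻¹ := by
        refine sum_le_card_nsmul _ _ _ fun l hl => ?_
        have := sq_le_nsq_of_mem_box hl
        push_cast at this
        gcongr
    _ ≤ 2 * d * 3 ^ (d - 1) * (r + 1 : ℝ) ^ (d - 1) * ((r + 1 : ℝ) ^ 2)⁻¹ := by
        rw [nsmul_eq_mul]
        gcongr
        exact card_box_succ_le d r
    _ = 2 * d * 3 ^ (d - 1) * ((r + 1 : ℝ) ^ (d - 1) / (r + 1) ^ 2) := by
        rw [mul_assoc, div_eq_mul_inv]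

lemma sum_Icc_inv_nsq_le (d R : ℕ) :
    ∑ l ∈ Icc (-R : ZLat d) R, (nsq l)⁻¹ ≤
      2 * d * 3 ^ (d - 1) * ∑ r ∈ range R, (r + 1 : ℝ) ^ (d - 1) / (r + 1) ^ 2 := by
  have origin : ∑ l ∈ (box 0 : Finset (ZLat d)), (nsq l)⁻¹ = 0 := by simp [nsq]
  rw [sum_Icc_neg_eq_sum_sum_box, sum_range_succ', origin, add_zero, mul_sum]
  exact sum_le_sum fun r _ => sum_box_succ_inv_nsq_le d r

end LatticeShells

section CutoffGreen

/-- The sum `∑ |ℓ|⁻²` over `0 < |ℓ|_∞ ≤ 1/ε`, that is, the Green function of the Laplacian on the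
diagonal, truncated at scale `ε`. The term `ℓ = 0` is included, but it is `0⁻¹ = 0`. -/
def cutoffGreen (d : ℕ) (ε : ℝ) : ℝ :=
  ∑ l ∈ Finset.Icc (-(⌊ε⁻¹⌋₊ : ZLat d)) ⌊ε⁻¹⌋₊, (nsq l)⁻¹

/-- A bound on `λ_ε² ∑ |ℓ|⁻²` that is uniform in `ε`. The factor `2 * d * 3 ^ (d - 1)` comes from
counting lattice points on shells, and `1 / log 2 + 1` bounds `(1 + x) / x` on `x ≥ log 2`. -/
def greenConst (d : ℕ) : ℝ := 2 * d * 3 ^ (d - 1) * (1 / Real.log 2 + 1)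

variable {d : ℕ} {ε : ℝ}

lemma cutoffGreen_nonneg (d : ℕ) (ε : ℝ) : 0 ≤ cutoffGreen d ε :=
  Finset.sum_nonneg fun l _ => inv_nonneg.mpr (nsq_nonneg l)

lemma greenConst_nonneg (d : ℕ) : 0 ≤ greenConst d := by
  have := Real.log_pos one_lt_two
  unfold greenConst
  positivity

lemma greenConst_pos (hd : d ≠ 0) : 0 < greenConst d := by
  have := Real.log_pos one_lt_two
  unfold greenConst
  positivity

lemma cutoffGreen_two_le (hε : 0 < ε) (hε1 : ε ≤ 1) :
    cutoffGreen 2 ε ≤ 2 * (2 : ℕ) * 3 ^ (2 - 1) * (1 + Real.log (1 / ε ^ 2)) := by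
  have harmonic_eq (R : ℕ) :
      ∑ r ∈ Finset.range R, (r + 1 : ℝ) ^ (2 - 1) / (r + 1) ^ 2 = (harmonic R : ℝ) := by
    rw [harmonic]
    push_cast
    refine Finset.sum_congr rfl fun r _ => ?_
    field_simp
  have log_le : Real.log ε⁻¹ ≤ Real.log (1 / ε ^ 2) := by
    rw [one_div]
    gcongr
    exact pow_le_of_le_one hε.le hε1 two_ne_zero
  refine (sum_Icc_inv_nsq_le 2 _).trans ?_
  rw [harmonic_eq]
  gcongr
  exact (harmonic_floor_le_one_add_log _ (one_le_inv₀ hε |>.mpr hε1)).trans (by gcongr)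

lemma cutoffGreen_add_three_le (e : ℕ) (hε : 0 < ε) :
    cutoffGreen (e + 3) ε ≤
      2 * (e + 3 : ℕ) * 3 ^ (e + 3 - 1) * (ε⁻¹) ^ (e + 1) := by
  have floor_le : (⌊ε⁻¹⌋₊ : ℝ) ≤ ε⁻¹ := Nat.floor_le (by positivity)
  have term_le : ∀ r ∈ Finset.range ⌊ε⁻¹⌋₊,
      (r + 1 : ℝ) ^ (e + 3 - 1) / (r + 1) ^ 2 ≤ ε⁻¹ ^ e := by
    intro r hr
    have hr' : (r + 1 : ℝ) ≤ ⌊ε⁻¹⌋₊ := mod_cast Finset.mem_range.mp hr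
    calc (r + 1 : ℝ) ^ (e + 3 - 1) / (r + 1) ^ 2 = (r + 1 : ℝ) ^ e := by
          rw [show e + 3 - 1 = e + 2 from rfl, pow_add]
          field_simp
      _ ≤ ε⁻¹ ^ e := by
          gcongr
          exact hr'.trans floor_le
  refine (sum_Icc_inv_nsq_le (e + 3) _).trans ?_
  gcongr
  calc ∑ r ∈ Finset.range ⌊ε⁻¹⌋₊, (r + 1 : ℝ) ^ (e + 3 - 1) / (r + 1) ^ 2
      ≤ ⌊ε⁻¹⌋₊ * ε⁻¹ ^ e := by
        simpa using Finset.sum_le_card_nsmul _ _ _ term_le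
    _ ≤ ε⁻¹ ^ (e + 1) := by
        rw [pow_succ']
        gcongr

lemma lam_two_sq (hε : 0 < ε) (hε1 : ε ≤ 1) : lam 2 ε ^ 2 = (Real.log (1 / ε ^ 2))⁻¹ := by
  have : 0 ≤ Real.log (1 / ε ^ 2) :=
    Real.log_nonneg (one_le_one_div (by positivity) (pow_le_one₀ hε.le hε1))
  rw [lam, if_pos rfl, inv_pow, Real.sq_sqrt this]

lemma lam_add_three_sq (e : ℕ) (hε : 0 ≤ ε) : lam (e + 3) ε ^ 2 = ε ^ (e + 1) := by
  rw [lam, if_neg (by lia), ← Real.rpow_mul_natCast hε, ← Real.rpow_natCast]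
  congr 1
  push_cast
  ring

lemma lam_two_sq_mul_cutoffGreen_le (hε : 0 < ε) (hε2 : ε ^ 2 ≤ 1 / 2) :
    lam 2 ε ^ 2 * cutoffGreen 2 ε ≤ greenConst 2 := by
  have hε1 : ε ≤ 1 := by nlinarith
  have log_two_pos := Real.log_pos one_lt_two
  have log_two_le : Real.log 2 ≤ Real.log (1 / ε ^ 2) := by
    gcongr
    rwa [le_one_div two_pos (by positivity)]
  rw [lam_two_sq hε hε1]
  set L := Real.log (1 / ε ^ 2)
  have hL : 0 < L := log_two_pos.trans_le log_two_le
  calc L⁻¹ * cutoffGreen 2 ε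
      ≤ L⁻¹ * (2 * (2 : ℕ) * 3 ^ (2 - 1) * (1 + L)) := by
        gcongr
        exact cutoffGreen_two_le hε hε1
    _ = 2 * (2 : ℕ) * 3 ^ (2 - 1) * (1 / L + 1) := by field_simp
    _ ≤ greenConst 2 := by
        unfold greenConst
        gcongr

lemma lam_add_three_sq_mul_cutoffGreen_le (e : ℕ) (hε : 0 < ε) :
    lam (e + 3) ε ^ 2 * cutoffGreen (e + 3) ε ≤ greenConst (e + 3) := by
  have := Real.log_pos one_lt_two
  rw [lam_add_three_sq e hε.le]
  calc ε ^ (e + 1) * cutoffGreen (e + 3) ε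
      ≤ ε ^ (e + 1) * (2 * (e + 3 : ℕ) * 3 ^ (e + 3 - 1) * ε⁻¹ ^ (e + 1)) := by
        gcongr
        exact cutoffGreen_add_three_le e hε
    _ = 2 * (e + 3 : ℕ) * 3 ^ (e + 3 - 1) := by
        rw [inv_pow]
        field_simp
    _ ≤ greenConst (e + 3) :=
        le_mul_of_one_le_right (by positivity) (le_add_of_nonneg_left (by positivity))

lemma lam_sq_mul_cutoffGreen_le (hd : 2 ≤ d) (hε : 0 < ε) (hε2 : d = 2 → ε ^ 2 ≤ 1 / 2) :
    lam d ε ^ 2 * cutoffGreen d ε ≤ greenConst d := by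
  match d, hd with
  | 2, _ => exact lam_two_sq_mul_cutoffGreen_le hε (hε2 rfl)
  | e + 3, _ => exact lam_add_three_sq_mul_cutoffGreen_le e hε

end CutoffGreen

section FourierCutoff

variable {d : ℕ} {ε : ℝ} {l m : ZLat d}

lemma abs_le_cutNorm (l : ZLat d) (i : Fin d) : |(l i : ℝ)| ≤ cutNorm d l := by
  unfold cutNorm
  split_ifs
  · exact Real.abs_le_sqrt (sq_le_nsq l i)
  · rw [← Int.cast_abs, ← Nat.cast_natAbs, sN]
    exact_mod_cast Finset.le_sup (f := fun i => (l i).natAbs) (Finset.mem_univ i)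

lemma cutNorm_zero (d : ℕ) : cutNorm d 0 = 0 := by
  unfold cutNorm
  split_ifs
  · simp [eN, nsq]
  · simp [sN]

lemma ne_zero_of_mul_cutNorm_pos (h : 0 < ε * cutNorm d l) : l ≠ 0 := by
  rintro rfl
  simp [cutNorm_zero] at h

lemma mem_Icc_of_mul_cutNorm_le_one (hε : 0 < ε) (h : ε * cutNorm d l ≤ 1) :
    l ∈ Finset.Icc (-(⌊ε⁻¹⌋₊ : ZLat d)) ⌊ε⁻¹⌋₊ := by
  refine mem_Icc_neg_natCast_iff.mpr fun i => ?_
  have : ((l i).natAbs : ℝ) ≤ ε⁻¹ := by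
    rw [Nat.cast_natAbs, Int.cast_abs, inv_eq_one_div, le_div_iff₀' hε]
    exact (mul_le_mul_of_nonneg_left (abs_le_cutNorm l i) hε.le).trans h
  rw [Int.abs_eq_natAbs]
  exact_mod_cast Nat.le_floor this

lemma Jind_ne_zero_iff : Jind d ε l m ≠ 0 ↔
    (0 < ε * cutNorm d l ∧ ε * cutNorm d l ≤ 1) ∧ (0 < ε * cutNorm d m ∧ ε * cutNorm d m ≤ 1) ∧
      0 < ε * cutNorm d (l + m) ∧ ε * cutNorm d (l + m) ≤ 1 := by
  simp only [Jind, ne_eq, ite_eq_right_iff, one_ne_zero, imp_false, not_not, and_assoc]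

lemma Jind_sq_le_one (d : ℕ) (ε : ℝ) (l m : ZLat d) : Jind d ε l m ^ 2 ≤ 1 := by
  unfold Jind
  split_ifs <;> norm_num

lemma sq_mul_nsq_le_one {k : ZLat 2} (h0 : 0 < ε * cutNorm 2 k) (h1 : ε * cutNorm 2 k ≤ 1) :
    ε ^ 2 * nsq k ≤ 1 := by
  have cutNorm_sq : cutNorm 2 k ^ 2 = nsq k := by
    rw [cutNorm, if_pos rfl, eN, Real.sq_sqrt (nsq_nonneg k)]
  rw [← cutNorm_sq, ← mul_pow]
  exact pow_le_one₀ h0.le h1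

lemma sq_le_half_of_Jind_ne_zero {l m : ZLat 2} (h : Jind 2 ε l m ≠ 0) : ε ^ 2 ≤ 1 / 2 := by
  obtain ⟨⟨hl0, hl1⟩, ⟨hm0, hm1⟩, hlm0, hlm1⟩ := Jind_ne_zero_iff.mp h
  obtain ⟨k, hk, two_le⟩ := exists_two_le_nsq_of_ne_zero (ne_zero_of_mul_cutNorm_pos hl0)
    (ne_zero_of_mul_cutNorm_pos hm0) (ne_zero_of_mul_cutNorm_pos hlm0)
  have : ε ^ 2 * nsq k ≤ 1 := by
    rcases hk with rfl | rfl | rfl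
    exacts [sq_mul_nsq_le_one hl0 hl1, sq_mul_nsq_le_one hm0 hm1, sq_mul_nsq_le_one hlm0 hlm1]
  nlinarith [sq_nonneg ε]

end FourierCutoff

section PairContraction

lemma norm_sum_sq_le_of_norm_sq_le_mul {ι E : Type*} [SeminormedAddCommGroup E] (s : Finset ι)
    {z : ι → E} {f g : ι → ℝ} (hf : ∀ i ∈ s, 0 ≤ f i) (hg : ∀ i ∈ s, 0 ≤ g i)
    (h : ∀ i ∈ s, ‖z i‖ ^ 2 ≤ f i * g i) :
    ‖∑ i ∈ s, z i‖ ^ 2 ≤ (∑ i ∈ s, f i) * ∑ i ∈ s, g i :=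
  calc ‖∑ i ∈ s, z i‖ ^ 2 ≤ (∑ i ∈ s, ‖z i‖) ^ 2 := by gcongr; exact norm_sum_le _ _
    _ ≤ (∑ i ∈ s, f i) * ∑ i ∈ s, g i := Finset.sum_sq_le_sum_mul_sum_of_sq_le_mul s hf hg h

/-- The sum of `f` over the admissible splits `p = ℓ + m` of a frequency, indexed by `ℓ`. This is
the inner sum in the definition of `A⁻_ε`. -/
def splitSum {d : ℕ} (ε : ℝ) (p : ZLat d) (f : ZLat d → ℂ) : ℂ :=
  ∑' l, (Jind d ε l (p - l) : ℂ) * f l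

variable {d : ℕ} {ε : ℝ} {f : ZLat d → ℂ}

lemma norm_Jind_mul_sq_le (l m : ZLat d) (z : ℂ) :
    ‖(Jind d ε l m : ℂ) * z‖ ^ 2 ≤ (nsq l)⁻¹ * (nsq l * ‖z‖ ^ 2) := by
  rcases eq_or_ne (Jind d ε l m) 0 with hJ | hJ
  · rw [hJ, Complex.ofReal_zero, zero_mul, norm_zero, zero_pow two_ne_zero]
    have := nsq_nonneg l
    positivity
  · have hl := nsq_pos (ne_zero_of_mul_cutNorm_pos (Jind_ne_zero_iff.mp hJ).1.1)
    rw [inv_mul_cancel_left₀ hl.ne', norm_mul, mul_pow, Complex.norm_real, Real.norm_eq_abs,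
      sq_abs]
    exact mul_le_of_le_one_left (sq_nonneg _) (Jind_sq_le_one d ε l m)

lemma norm_splitSum_sq_le (hε : 0 < ε) (p : ZLat d) (hf : Summable fun l => nsq l * ‖f l‖ ^ 2) :
    ‖splitSum ε p f‖ ^ 2 ≤ cutoffGreen d ε * ∑' l, nsq l * ‖f l‖ ^ 2 := by
  have weight_nonneg (l : ZLat d) : 0 ≤ nsq l * ‖f l‖ ^ 2 :=
    mul_nonneg (nsq_nonneg l) (sq_nonneg _)
  set S := Finset.Icc (-(⌊ε⁻¹⌋₊ : ZLat d)) ⌊ε⁻¹⌋₊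
  have finite_sum : splitSum ε p f = ∑ l ∈ S, (Jind d ε l (p - l) : ℂ) * f l := by
    refine tsum_eq_sum fun l hl => ?_
    have : Jind d ε l (p - l) = 0 := by
      contrapose! hl
      exact mem_Icc_of_mul_cutNorm_le_one hε (Jind_ne_zero_iff.mp hl).1.2
    rw [this, Complex.ofReal_zero, zero_mul]
  calc ‖splitSum ε p f‖ ^ 2 ≤ (∑ l ∈ S, (nsq l)⁻¹) * ∑ l ∈ S, nsq l * ‖f l‖ ^ 2 := by
        rw [finite_sum]
        exact norm_sum_sq_le_of_norm_sq_le_mul S (fun l _ => inv_nonneg.mpr (nsq_nonneg l))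
          (fun l _ => weight_nonneg l) fun l _ => norm_Jind_mul_sq_le l (p - l) (f l)
    _ ≤ cutoffGreen d ε * ∑' l, nsq l * ‖f l‖ ^ 2 :=
        mul_le_mul_of_nonneg_left (hf.sum_le_tsum _ fun l _ => weight_nonneg l)
          (cutoffGreen_nonneg d ε)

lemma lam_sq_mul_norm_splitSum_sq_le (hd : 2 ≤ d) (hε : 0 < ε) (p : ZLat d)
    (hf : Summable fun l => nsq l * ‖f l‖ ^ 2) :
    lam d ε ^ 2 * ‖splitSum ε p f‖ ^ 2 ≤ greenConst d * ∑' l, nsq l * ‖f l‖ ^ 2 := by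
  have energy_nonneg : 0 ≤ ∑' l, nsq l * ‖f l‖ ^ 2 :=
    tsum_nonneg fun l => mul_nonneg (nsq_nonneg l) (sq_nonneg _)
  by_cases hJ : ∀ l, Jind d ε l (p - l) = 0
  · have : splitSum ε p f = 0 := by simp [splitSum, hJ]
    rw [this, norm_zero, zero_pow two_ne_zero, mul_zero]
    exact mul_nonneg (greenConst_nonneg d) energy_nonneg
  · obtain ⟨l, hl⟩ := not_forall.mp hJ
    have hε2 : d = 2 → ε ^ 2 ≤ 1 / 2 := by
      rintro rfl
      exact sq_le_half_of_Jind_ne_zero hl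
    calc lam d ε ^ 2 * ‖splitSum ε p f‖ ^ 2
        ≤ lam d ε ^ 2 * (cutoffGreen d ε * ∑' l, nsq l * ‖f l‖ ^ 2) := by
          gcongr
          exact norm_splitSum_sq_le hε p hf
      _ = lam d ε ^ 2 * cutoffGreen d ε * ∑' l, nsq l * ‖f l‖ ^ 2 := by ring
      _ ≤ greenConst d * ∑' l, nsq l * ‖f l‖ ^ 2 := by
          gcongr
          exact lam_sq_mul_cutoffGreen_le hd hε hε2

end PairContraction

section SobolevNorms

variable {d n : ℕ}

lemma sobTerm_half (f : Chaos d n) (k : Fin n → ZLat d) :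
    sobTerm (1 / 2) f k = wSq k / 2 * ‖f k‖ ^ 2 := by
  rw [sobTerm, mul_one_div_cancel two_ne_zero, Real.rpow_one]

lemma sobTerm_neg_half (f : Chaos d n) (k : Fin n → ZLat d) :
    sobTerm (-(1 / 2)) f k = (wSq k / 2)⁻¹ * ‖f k‖ ^ 2 := by
  rw [sobTerm, mul_neg, mul_one_div_cancel two_ne_zero, Real.rpow_neg_one]

lemma sobTerm_nonneg (s : ℝ) (f : Chaos d n) (k : Fin n → ZLat d) : 0 ≤ sobTerm s f k := by
  have := wSq_nonneg k
  unfold sobTerm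
  positivity

/-- The contribution `∑_K |K_a|² |ψ(K)|²` of the `a`-th frequency to the energy of `ψ`. -/
def modeEnergy (ψ : Chaos d n) (a : Fin n) : ℝ := ∑' K, nsq (K a) * ‖ψ K‖ ^ 2

lemma summable_nsq_apply_mul {ψ : Chaos d n} (hψ : Summable (sobTerm (1 / 2) ψ)) (a : Fin n) :
    Summable fun K : Fin n → ZLat d => nsq (K a) * ‖ψ K‖ ^ 2 := by
  refine Summable.of_nonneg_of_le (fun K => mul_nonneg (nsq_nonneg _) (sq_nonneg _))
    (fun K => ?_) (hψ.mul_left 2)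
  calc nsq (K a) * ‖ψ K‖ ^ 2 ≤ wSq K * ‖ψ K‖ ^ 2 := by
        gcongr
        exact nsq_le_wSq K a
    _ = 2 * sobTerm (1 / 2) ψ K := by
        rw [sobTerm_half]
        ring

lemma sum_modeEnergy {ψ : Chaos d n} (hψ : Summable (sobTerm (1 / 2) ψ)) :
    ∑ a, modeEnergy ψ a = 2 * ∑' K, sobTerm (1 / 2) ψ K := by
  unfold modeEnergy
  rw [← Summable.tsum_finsetSum fun a _ => summable_nsq_apply_mul hψ a, ← tsum_mul_left]
  refine tsum_congr fun K => ?_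
  rw [sobTerm_half, ← Finset.sum_mul, ← wSq]
  ring

lemma modeEnergy_eq_of_symm {ψ : Chaos d n} (hs : Symm ψ) (a b : Fin n) :
    modeEnergy ψ a = modeEnergy ψ b := by
  let swapModes : (Fin n → ZLat d) ≃ (Fin n → ZLat d) :=
    (Equiv.swap a b).arrowCongr (Equiv.refl _)
  have swapModes_apply (K : Fin n → ZLat d) : swapModes K = K ∘ Equiv.swap a b := rfl
  unfold modeEnergy
  rw [← swapModes.tsum_eq]
  refine tsum_congr fun K => ?_
  rw [swapModes_apply, hs, Function.comp_apply, Equiv.swap_apply_left]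

lemma natCast_mul_modeEnergy {ψ : Chaos d n} (hs : Symm ψ) (hψ : Summable (sobTerm (1 / 2) ψ))
    (a : Fin n) : n * modeEnergy ψ a = 2 * ∑' K, sobTerm (1 / 2) ψ K := by
  rw [← sum_modeEnergy hψ, Finset.sum_congr rfl fun b _ => modeEnergy_eq_of_symm hs b a]
  simp

end SobolevNorms

section SplitModes

/-- The tuple `(ℓ, k_j - ℓ, k without k_j)` at which `A⁻ψ(k)` evaluates `ψ`, as a function of the
pair `(k, ℓ)`. -/
def splitMode {G : Type*} [Sub G] {n : ℕ} (j : Fin (n + 1)) (q : (Fin (n + 1) → G) × G) :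
    Fin (n + 2) → G :=
  Fin.cons q.2 (Fin.cons (q.1 j - q.2) fun a => q.1 (j.succAbove a))

lemma splitMode_injective {G : Type*} [AddGroup G] {n : ℕ} (j : Fin (n + 1)) :
    Function.Injective (splitMode (G := G) j) := by
  rintro ⟨k, l⟩ ⟨k', l'⟩ h
  simp only [splitMode, Fin.cons_inj] at h
  obtain ⟨rfl, hj, hrest⟩ := h
  refine Prod.ext (funext fun a => ?_) rfl
  rcases Fin.eq_self_or_eq_succAbove j a with rfl | ⟨b, rfl⟩
  · exact sub_left_injective hj
  · exact congrFun hrest b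

lemma splitMode_zero {G : Type*} [Sub G] {n : ℕ} (j : Fin (n + 1)) (q : (Fin (n + 1) → G) × G) :
    splitMode j q 0 = q.2 :=
  rfl

variable {d n : ℕ} {ψ : Chaos d (n + 2)}

/-- The energy `∑_ℓ |ℓ|² |ψ(ℓ, k_j - ℓ, …)|²` of the splits of the `j`-th frequency of `k`. -/
def splitEnergy (ψ : Chaos d (n + 2)) (j : Fin (n + 1)) (k : Fin (n + 1) → ZLat d) : ℝ :=
  ∑' l, nsq l * ‖ψ (splitMode j (k, l))‖ ^ 2

lemma summable_nsq_mul_splitMode (hψ : Summable (sobTerm (1 / 2) ψ)) (j : Fin (n + 1)) :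
    Summable fun q : (Fin (n + 1) → ZLat d) × ZLat d => nsq q.2 * ‖ψ (splitMode j q)‖ ^ 2 := by
  simpa only [Function.comp_def, splitMode_zero] using
    (summable_nsq_apply_mul hψ 0).comp_injective (splitMode_injective j)

lemma summable_splitEnergy (hψ : Summable (sobTerm (1 / 2) ψ)) (j : Fin (n + 1)) :
    Summable (splitEnergy ψ j) :=
  (summable_nsq_mul_splitMode hψ j).prod

lemma tsum_splitEnergy_le (hψ : Summable (sobTerm (1 / 2) ψ)) (j : Fin (n + 1)) :
    ∑' k, splitEnergy ψ j k ≤ modeEnergy ψ 0 := by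
  unfold splitEnergy modeEnergy
  rw [← (summable_nsq_mul_splitMode hψ j).tsum_prod]
  simpa only [Function.comp_def, splitMode_zero] using
    tsum_comp_le_tsum_of_inj (summable_nsq_apply_mul hψ 0)
      (fun K => mul_nonneg (nsq_nonneg _) (sq_nonneg _)) (splitMode_injective j)

end SplitModes

section SectorBound

/-- The modulus `2 / (2π)^{d/2}` of the prefactor of `A⁻_ε`. -/
def vertexConst (d : ℕ) : ℝ := 2 / (2 * Real.pi) ^ ((d : ℝ) / 2)

/-- The square of the constant in the graded sector bound. -/
def sectorConst (d : ℕ) (w : Fin d → ℝ) : ℝ :=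
  4 * vertexConst d ^ 2 * (∑ i, w i ^ 2) * greenConst d

variable {d n : ℕ} {ε : ℝ} {ψ : Chaos d (n + 2)}

lemma sectorConst_nonneg (w : Fin d → ℝ) : 0 ≤ sectorConst d w := by
  have := greenConst_nonneg d
  unfold sectorConst
  positivity

lemma sectorConst_pos {w : Fin d → ℝ} (hw : w ≠ 0) : 0 < sectorConst d w := by
  obtain ⟨i, hi⟩ := Function.ne_iff.mp hw
  have vertexConst_pos : 0 < vertexConst d := by
    unfold vertexConst
    positivity
  have w_sq_pos : 0 < ∑ i, w i ^ 2 :=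
    Finset.sum_pos' (fun _ _ => sq_nonneg _) ⟨i, Finset.mem_univ i, sq_pos_of_ne_zero hi⟩
  have := greenConst_pos i.pos.ne'
  unfold sectorConst
  positivity

lemma norm_Aminus_sq (w : Fin d → ℝ) (ε : ℝ) (ψ : Chaos d (n + 2)) (k : Fin (n + 1) → ZLat d) :
    ‖Aminus d w ε ψ k‖ ^ 2 = vertexConst d ^ 2 * (n + 2 : ℝ) ^ 2 * lam d ε ^ 2 *
      ‖∑ j, (dotw w (k j) : ℂ) * splitSum ε (k j) fun l => ψ (splitMode j (k, l))‖ ^ 2 := by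
  have norm_prefactor :
      ‖2 * Complex.I / (((2 * Real.pi) ^ ((d : ℝ) / 2) : ℝ) : ℂ)‖ = vertexConst d := by
    rw [norm_div, norm_mul, Complex.norm_I, Complex.norm_ofNat, mul_one,
      Complex.norm_of_nonneg (by positivity), vertexConst]
  have : Aminus d w ε ψ k = 2 * Complex.I / (((2 * Real.pi) ^ ((d : ℝ) / 2) : ℝ) : ℂ) *
      (((n + 2 : ℝ) * lam d ε : ℝ) : ℂ) *
      ∑ j, (dotw w (k j) : ℂ) * splitSum ε (k j) fun l => ψ (splitMode j (k, l)) := rfl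
  rw [this, norm_mul, norm_mul, norm_prefactor, Complex.norm_real, Real.norm_eq_abs, mul_pow,
    mul_pow, sq_abs]
  ring

lemma inv_wSq_mul_norm_sum_dotw_mul_sq_le (w : Fin d → ℝ) (k : Fin n → ZLat d) (z : Fin n → ℂ) :
    (wSq k / 2)⁻¹ * ‖∑ j, (dotw w (k j) : ℂ) * z j‖ ^ 2 ≤
      2 * (∑ i, w i ^ 2) * ∑ j, ‖z j‖ ^ 2 := by
  have w_sq_nonneg : 0 ≤ ∑ i, w i ^ 2 := Finset.sum_nonneg fun _ _ => sq_nonneg _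
  have cauchy_schwarz : ‖∑ j, (dotw w (k j) : ℂ) * z j‖ ^ 2 ≤
      (∑ i, w i ^ 2) * wSq k * ∑ j, ‖z j‖ ^ 2 := by
    rw [wSq, Finset.mul_sum Finset.univ fun a => nsq (k a)]
    refine norm_sum_sq_le_of_norm_sq_le_mul _
      (fun j _ => mul_nonneg w_sq_nonneg (nsq_nonneg _)) (fun j _ => sq_nonneg _) fun j _ => ?_
    rw [norm_mul, mul_pow, Complex.norm_real, Real.norm_eq_abs, sq_abs]
    gcongr
    exact dotw_sq_le w (k j)
  have hk := wSq_nonneg k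
  calc (wSq k / 2)⁻¹ * ‖∑ j, (dotw w (k j) : ℂ) * z j‖ ^ 2
      ≤ (wSq k / 2)⁻¹ * ((∑ i, w i ^ 2) * wSq k * ∑ j, ‖z j‖ ^ 2) := by gcongr
    _ = (wSq k)⁻¹ * wSq k * (2 * (∑ i, w i ^ 2) * ∑ j, ‖z j‖ ^ 2) := by
        rw [inv_div]
        ring
    _ ≤ 2 * (∑ i, w i ^ 2) * ∑ j, ‖z j‖ ^ 2 :=
        mul_le_of_le_one_left (by positivity) (inv_mul_le_one)

lemma sobTerm_Aminus_le (hd : 2 ≤ d) (w : Fin d → ℝ) (hε : 0 < ε)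
    (hψ : Summable (sobTerm (1 / 2) ψ)) (k : Fin (n + 1) → ZLat d) :
    sobTerm (-(1 / 2)) (Aminus d w ε ψ) k ≤
      sectorConst d w / 2 * (n + 2 : ℝ) ^ 2 * ∑ j, splitEnergy ψ j k := by
  let z (j : Fin (n + 1)) : ℂ := splitSum ε (k j) fun l => ψ (splitMode j (k, l))
  have split_le (j : Fin (n + 1)) :
      lam d ε ^ 2 * ‖z j‖ ^ 2 ≤ greenConst d * splitEnergy ψ j k :=
    lam_sq_mul_norm_splitSum_sq_le hd hε (k j) ((summable_nsq_mul_splitMode hψ j).prod_factor k)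
  calc sobTerm (-(1 / 2)) (Aminus d w ε ψ) k
      = vertexConst d ^ 2 * (n + 2 : ℝ) ^ 2 * lam d ε ^ 2 *
          ((wSq k / 2)⁻¹ * ‖∑ j, (dotw w (k j) : ℂ) * z j‖ ^ 2) := by
        rw [sobTerm_neg_half, norm_Aminus_sq]
        ring
    _ ≤ vertexConst d ^ 2 * (n + 2 : ℝ) ^ 2 * lam d ε ^ 2 *
          (2 * (∑ i, w i ^ 2) * ∑ j, ‖z j‖ ^ 2) := by
        exact mul_le_mul_of_nonneg_left (inv_wSq_mul_norm_sum_dotw_mul_sq_le w k z)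
          (by positivity)
    _ = vertexConst d ^ 2 * (n + 2 : ℝ) ^ 2 * (2 * ∑ i, w i ^ 2) *
          ∑ j, lam d ε ^ 2 * ‖z j‖ ^ 2 := by
        rw [← Finset.mul_sum]
        ring
    _ ≤ vertexConst d ^ 2 * (n + 2 : ℝ) ^ 2 * (2 * ∑ i, w i ^ 2) *
          ∑ j, greenConst d * splitEnergy ψ j k := by
        exact mul_le_mul_of_nonneg_left (Finset.sum_le_sum fun j _ => split_le j)
          (by positivity)
    _ = sectorConst d w / 2 * (n + 2 : ℝ) ^ 2 * ∑ j, splitEnergy ψ j k := by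
        rw [← Finset.mul_sum, sectorConst]
        ring

lemma summable_sectorConst_mul_sum_splitEnergy (w : Fin d → ℝ)
    (hψ : Summable (sobTerm (1 / 2) ψ)) :
    Summable fun k => sectorConst d w / 2 * (n + 2 : ℝ) ^ 2 * ∑ j, splitEnergy ψ j k :=
  (summable_sum fun j _ => summable_splitEnergy hψ j).mul_left _

lemma summable_sobTerm_Aminus (hd : 2 ≤ d) (w : Fin d → ℝ) (hε : 0 < ε)
    (hψ : Summable (sobTerm (1 / 2) ψ)) : Summable (sobTerm (-(1 / 2)) (Aminus d w ε ψ)) :=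
  .of_nonneg_of_le (sobTerm_nonneg _ _) (sobTerm_Aminus_le hd w hε hψ)
    (summable_sectorConst_mul_sum_splitEnergy w hψ)

lemma tsum_sobTerm_Aminus_le (hd : 2 ≤ d) (w : Fin d → ℝ) (hε : 0 < ε) (hs : Symm ψ)
    (hψ : Summable (sobTerm (1 / 2) ψ)) :
    ∑' k, sobTerm (-(1 / 2)) (Aminus d w ε ψ) k ≤
      sectorConst d w * (n + 2) * (n + 1) * ∑' K, sobTerm (1 / 2) ψ K := by
  have hC := sectorConst_nonneg w
  have energy := natCast_mul_modeEnergy hs hψ 0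
  push_cast at energy
  calc ∑' k, sobTerm (-(1 / 2)) (Aminus d w ε ψ) k
      ≤ ∑' k, sectorConst d w / 2 * (n + 2 : ℝ) ^ 2 * ∑ j, splitEnergy ψ j k :=
        (summable_sobTerm_Aminus hd w hε hψ).tsum_le_tsum (sobTerm_Aminus_le hd w hε hψ)
          (summable_sectorConst_mul_sum_splitEnergy w hψ)
    _ = sectorConst d w / 2 * (n + 2 : ℝ) ^ 2 * ∑ j, ∑' k, splitEnergy ψ j k := by
        rw [tsum_mul_left, Summable.tsum_finsetSum fun j _ => summable_splitEnergy hψ j]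
    _ ≤ sectorConst d w / 2 * (n + 2 : ℝ) ^ 2 * ∑ _j : Fin (n + 1), modeEnergy ψ 0 := by
        gcongr with j
        exact tsum_splitEnergy_le hψ j
    _ = sectorConst d w / 2 * (n + 2) * (n + 1) * ((n + 2) * modeEnergy ψ 0) := by
        rw [Finset.sum_const, Finset.card_univ, Fintype.card_fin, nsmul_eq_mul]
        push_cast
        ring
    _ = sectorConst d w * (n + 2) * (n + 1) * ∑' K, sobTerm (1 / 2) ψ K := by
        rw [energy]
        ring

lemma sobSq_Aminus_le (hd : 2 ≤ d) (w : Fin d → ℝ) (hε : 0 < ε) (hs : Symm ψ)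
    (hψ : Summable (sobTerm (1 / 2) ψ)) :
    sobSq (-(1 / 2)) (Aminus d w ε ψ) ≤ sectorConst d w * (n + 2) * sobSq (1 / 2) ψ := by
  have hC := sectorConst_nonneg w
  have hQ : 0 ≤ ∑' K, sobTerm (1 / 2) ψ K := tsum_nonneg (sobTerm_nonneg _ _)
  calc sobSq (-(1 / 2)) (Aminus d w ε ψ)
      ≤ (n + 1).factorial *
          (sectorConst d w * (n + 2) * (n + 1) * ∑' K, sobTerm (1 / 2) ψ K) := by
        unfold sobSq
        gcongr
        exact tsum_sobTerm_Aminus_le hd w hε hs hψ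
    _ ≤ (n + 1).factorial *
          (sectorConst d w * (n + 2) * (n + 2) * ∑' K, sobTerm (1 / 2) ψ K) := by
        gcongr
        norm_num
    _ = sectorConst d w * (n + 2) * sobSq (1 / 2) ψ := by
        rw [sobSq, Nat.factorial_succ (n + 1)]
        push_cast
        ring

end SectorBound

/-- graded sector bound, `−` case.
For `d ≥ 2` and `w ∈ ℝ^d \ {0}` there is a constant `C > 0` (independent of `ε`, `n`
and `ψ`) such that for every `ε ∈ (0,1)`, every `n ≥ 2` (here the chaos level is `n+2 ≥ 2`)
and every symmetric `ψ ∈ ΓL²_{n+2}` supported on `(ℤ^d_0)^{n+2}` with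
`‖(−L₀)^{1/2}ψ‖ < ∞`, one has `‖(−L₀)^{−1/2} A⁻_ε ψ‖ ≤ C √(n+2) ‖(−L₀)^{1/2} ψ‖`. -/
theorem stmt1 (d : ℕ) (hd : 2 ≤ d) (w : Fin d → ℝ) (hw : w ≠ 0) :
    ∃ C : ℝ, 0 < C ∧
      ∀ ε : ℝ, 0 < ε → ε < 1 →
      ∀ (n : ℕ) (ψ : Chaos d (n+2)),
        Symm ψ → SuppOk ψ → Summable (sobTerm (1/2 : ℝ) ψ) →
        Summable (sobTerm (-(1/2) : ℝ) (Aminus d w ε ψ)) ∧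
        Real.sqrt (sobSq (-(1/2) : ℝ) (Aminus d w ε ψ)) ≤
          C * Real.sqrt ((n : ℝ) + 2) * Real.sqrt (sobSq (1/2 : ℝ) ψ) := by
  refine ⟨√(sectorConst d w), Real.sqrt_pos.mpr (sectorConst_pos hw), ?_⟩
  intro ε hε _ n ψ hs _ hψ
  refine ⟨summable_sobTerm_Aminus hd w hε hψ, ?_⟩
  have hC := sectorConst_nonneg w
  calc √(sobSq (-(1 / 2)) (Aminus d w ε ψ))
      ≤ √(sectorConst d w * (n + 2) * sobSq (1 / 2) ψ) :=
        Real.sqrt_le_sqrt (sobSq_Aminus_le hd w hε hs hψ)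
    _ = √(sectorConst d w) * √(n + 2) * √(sobSq (1 / 2) ψ) := by
        rw [Real.sqrt_mul (by positivity), Real.sqrt_mul hC]

end SBE
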